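/- arXiv:2101.12440 — 2 statements merged into one kernel-verified Lean document; each statement's English description precedes it below -/
import Mathlib

section
/- Buchsbaum–Eisenbud acyclicity criterion: a complex 0 → F_n → F_{n−1} → ... → F_1 → F_0 of finite free modules over a Noetherian ring is exact if and only if for each i, rank(φ_i) + rank(φ_{i+1}) = rank(F_i) and grade(I_{rank(φ_i)}(φ_i)) ≥ i, where I_r(φ) is the ideal of r×r minors of a matrix representing φ_i. -/
open Matrix

variable {R : Type*} [CommRing R]

/-- The ideal of `r × r` minors of a matrix. -/
def minorsIdeal {p q : ℕ} (r : ℕ) (M : Matrix (Fin p) (Fin q) R) : Ideal R :=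
  Ideal.span {d | ∃ (ri : Fin r → Fin p) (ci : Fin r → Fin q),
    d = (M.submatrix ri ci).det}

/-- The (determinantal) rank of a matrix over a commutative ring: the largest
`r` such that the ideal of `r × r` minors is nonzero. -/
noncomputable def matRank {p q : ℕ} (M : Matrix (Fin p) (Fin q) R) : ℕ :=
  sSup {r | minorsIdeal r M ≠ ⊥}

/-- `grade I ≥ i`: the ideal `I` contains a regular sequence of length `i`. -/
def GradeGE (I : Ideal R) (i : ℕ) : Prop :=
  ∃ xs : List R, xs.length = i ∧ (∀ x ∈ xs, x ∈ I) ∧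
    RingTheory.Sequence.IsWeaklyRegular R xs


namespace BE

/-- A square product `X * Y` through `Fin q` allows cancelling `X` up to its determinant. -/
lemma cancel_left {m : Type*} [Fintype m] [DecidableEq m] {q : ℕ} (e : Fin q ≃ m)
    (X : Matrix m (Fin q) R) (Y : Matrix (Fin q) m R) (w : Fin q → R) (hw : X *ᵥ w = 0) :
    (X * Y).det • w = 0 := by
  have h1 : (X * Y).det = (X.submatrix e id).det * (Y.submatrix id e).det := by
    have h := Matrix.submatrix_mul_equiv X Y e (Equiv.refl _) e
    rw [Equiv.coe_refl] at h
    rw [← Matrix.det_mul, h, Matrix.det_submatrix_equiv_self]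
  have h2 : (X.submatrix e id) *ᵥ w = 0 := by
    funext i
    exact congrFun hw (e i)
  have h3 : (X.submatrix e id).det • w = 0 := by
    have := congrArg (fun z => (X.submatrix e id).adjugate *ᵥ z) h2
    simpa [Matrix.mulVec_mulVec, Matrix.adjugate_mul, Matrix.smul_mulVec] using this
  rw [h1, mul_comm, mul_smul, h3, smul_zero]

lemma cancel_right {m : Type*} [Fintype m] [DecidableEq m] {p q : ℕ} (e : Fin q ≃ m)
    (X : Matrix m (Fin q) R) (Y : Matrix (Fin q) m R) (C : Matrix (Fin p) (Fin q) R)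
    (hC : C * Y = 0) :
    (X * Y).det • C = 0 := by
  have h1 : (X * Y).det = (X.submatrix e id).det * (Y.submatrix id e).det := by
    have h := Matrix.submatrix_mul_equiv X Y e (Equiv.refl _) e
    rw [Equiv.coe_refl] at h
    rw [← Matrix.det_mul, h, Matrix.det_submatrix_equiv_self]
  have h2 : C * (Y.submatrix id e) = 0 := by
    ext i j
    exact congrFun (congrFun hC i) (e j)
  have h3 : (Y.submatrix id e).det • C = 0 := by
    have := congrArg (fun z => z * (Y.submatrix id e).adjugate) h2
    simpa [Matrix.mul_assoc, Matrix.mul_adjugate] using this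
  rw [h1, mul_smul, h3, smul_zero]

lemma exists_minor {p q ρ : ℕ} {A : Matrix (Fin p) (Fin q) R} {P : Ideal R}
    (h : ¬ minorsIdeal ρ A ≤ P) :
    ∃ (ri : Fin ρ → Fin p) (ci : Fin ρ → Fin q), (A.submatrix ri ci).det ∉ P := by
  by_contra! hc
  apply h
  rw [minorsIdeal, Ideal.span_le]
  rintro d ⟨ri, ci, rfl⟩
  exact hc ri ci

lemma minor_mem {p q ρ : ℕ} (A : Matrix (Fin p) (Fin q) R)
    (ri : Fin ρ → Fin p) (ci : Fin ρ → Fin q) : (A.submatrix ri ci).det ∈ minorsIdeal ρ A :=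
  Ideal.subset_span ⟨ri, ci, rfl⟩

/-- A minor outside `P` gives a two-sided scalar factorization. -/
lemma exists_factor {p q ρ : ℕ} {A : Matrix (Fin p) (Fin q) R} {P : Ideal R}
    (h : ¬ minorsIdeal ρ A ≤ P) :
    ∃ d, d ∉ P ∧ ∃ (s1 : Matrix (Fin q) (Fin ρ) R) (s2 : Matrix (Fin ρ) (Fin p) R),
      s2 * A * s1 = d • (1 : Matrix (Fin ρ) (Fin ρ) R) := by
  obtain ⟨ri, ci, hd⟩ := exists_minor h
  refine ⟨_, hd, (1 : Matrix (Fin q) (Fin q) R).submatrix id ci,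
    (A.submatrix ri ci).adjugate * (1 : Matrix (Fin p) (Fin p) R).submatrix ri id, ?_⟩
  rw [← Matrix.adjugate_mul, Matrix.mul_assoc, Matrix.mul_assoc]
  congr 1
  have h1 : A * (1 : Matrix (Fin q) (Fin q) R).submatrix id ci = A.submatrix id ci := by
    have := Matrix.submatrix_mul_equiv A 1 id (Equiv.refl _) ci
    simpa using this
  have h2 : (1 : Matrix (Fin p) (Fin p) R).submatrix ri id * A.submatrix id ci
      = A.submatrix ri ci := by
    have := Matrix.submatrix_mul_equiv 1 A ri (Equiv.refl _) ci
    simpa using this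
  rw [h1, h2]

lemma key {p q l ρ β : ℕ} (A : Matrix (Fin p) (Fin q) R) (B : Matrix (Fin q) (Fin l) R)
    (hAB : A * B = 0) (hq : ρ + β = q) (P : Ideal R) [P.IsPrime]
    (hA : ¬ minorsIdeal ρ A ≤ P) (hB : ¬ minorsIdeal β B ≤ P) :
    ∃ D, D ∉ P ∧ (∀ v, A *ᵥ v = 0 → ∃ u, D • v = B *ᵥ u) ∧
      ∃ (t1 : Matrix (Fin q) (Fin ρ) R) (t2 : Matrix (Fin ρ) (Fin p) R),
        A * (t1 * t2) * A = D • A := by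
  obtain ⟨d, hd, s1, s2, hs⟩ := exists_factor hA
  obtain ⟨e, he, t1, t2, ht⟩ := exists_factor hB
  let X := Matrix.fromRows (s2 * A) t2
  let Y := Matrix.fromCols s1 (B * t1)
  have hXY : (X * Y).det = d ^ ρ * e ^ β := by
    have : X * Y = Matrix.fromBlocks (d • 1) 0 (t2 * s1) (e • 1) := by
      simp only [X, Y]
      rw [Matrix.fromRows_mul_fromCols, hs, ← Matrix.mul_assoc t2, ht]
      congr 1
      rw [Matrix.mul_assoc, ← Matrix.mul_assoc A, hAB]
      simp
    rw [this, Matrix.det_fromBlocks_zero₁₂]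
    simp
  have eq : Fin q ≃ Fin ρ ⊕ Fin β := (finCongr hq.symm).trans finSumFinEquiv.symm
  have hΔ : (X * Y).det ∉ P := by
    rw [hXY]
    intro h
    rcases Ideal.IsPrime.mem_or_mem ‹_› h with h | h
    · exact hd (Ideal.IsPrime.mem_of_pow_mem ‹_› _ h)
    · exact he (Ideal.IsPrime.mem_of_pow_mem ‹_› _ h)
  set Δ := (X * Y).det with hΔdef
  refine ⟨Δ * (d * e), ?_, ?_, ?_⟩
  · intro h
    rcases Ideal.IsPrime.mem_or_mem ‹_› h with h | h
    · exact hΔ h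
    · rcases Ideal.IsPrime.mem_or_mem ‹_› h with h | h
      · exact hd h
      · exact he h
  · intro v hv
    refine ⟨(Δ * d) • (t1 *ᵥ (t2 *ᵥ v)), ?_⟩
    have h0 : X *ᵥ (e • v - B *ᵥ (t1 *ᵥ (t2 *ᵥ v))) = 0 := by
      simp only [X]
      rw [Matrix.fromRows_mulVec]
      have h1 : (s2 * A) *ᵥ (e • v - B *ᵥ (t1 *ᵥ (t2 *ᵥ v))) = 0 := by
        rw [← Matrix.mulVec_mulVec, Matrix.mulVec_sub, Matrix.mulVec_smul, hv,
          Matrix.mulVec_mulVec, hAB]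
        simp
      have h2 : t2 *ᵥ (e • v - B *ᵥ (t1 *ᵥ (t2 *ᵥ v))) = 0 := by
        rw [Matrix.mulVec_sub, Matrix.mulVec_smul, Matrix.mulVec_mulVec, Matrix.mulVec_mulVec,
          ht, Matrix.smul_mulVec, Matrix.one_mulVec, sub_self]
      rw [h1, h2]
      funext i
      cases i <;> rfl
    have h3 := cancel_left eq X Y _ h0
    rw [← hΔdef, smul_sub, sub_eq_zero] at h3
    rw [Matrix.mulVec_smul, mul_comm Δ d, mul_smul d, ← h3, smul_smul, smul_smul]
    congr 1
    ring
  · refine ⟨(Δ * e) • s1, s2, ?_⟩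
    have h0 : (A * (d • 1 - s1 * s2 * A)) * Y = 0 := by
      simp only [Y]
      rw [Matrix.mul_fromCols]
      have h1 : A * (d • 1 - s1 * s2 * A) * s1 = 0 := by
        rw [Matrix.mul_assoc, Matrix.sub_mul, Matrix.mul_assoc s1, Matrix.mul_assoc s1, hs]
        simp
      have h2 : A * (d • 1 - s1 * s2 * A) * (B * t1) = 0 := by
        rw [Matrix.mul_assoc, Matrix.sub_mul, Matrix.mul_assoc _ A, ← Matrix.mul_assoc A B, hAB]
        simp only [Matrix.smul_mul, Matrix.one_mul, Matrix.zero_mul, Matrix.mul_zero, sub_zero,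
          Matrix.mul_smul]
        rw [← Matrix.mul_assoc A B, hAB]
        simp
      rw [h1, h2]
      ext i j
      cases j <;> rfl
    have h3 := cancel_right eq X Y _ h0
    rw [← hΔdef, Matrix.mul_sub, smul_sub, sub_eq_zero] at h3
    have h4 : A * (((Δ * e) • s1) * s2) * A = e • (Δ • (A * (s1 * s2 * A))) := by
      simp only [Matrix.smul_mul, Matrix.mul_smul, smul_smul, Matrix.mul_assoc, mul_comm]
    rw [h4, ← h3, Matrix.mul_smul, Matrix.mul_one, smul_smul, smul_smul]
    congr 1
    ring

end BE
namespace BE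

lemma field_cols {K : Type*} [Field K] {p q r : ℕ} (A : Matrix (Fin p) (Fin q) K)
    (hA : A.rank = r) :
    ∃ (ci : Fin r → Fin q), LinearIndependent K (A.submatrix id ci).col := by
  obtain ⟨f, hf, -, hli⟩ := Submodule.exists_fun_fin_finrank_span_eq K (Set.range A.col)
  choose c hc using hf
  have hr : A.rank = Module.finrank K (Submodule.span K (Set.range A.col)) :=
    A.rank_eq_finrank_span_cols
  rw [← hA, hr]
  refine ⟨c, ?_⟩
  have : (A.submatrix id c).col = f := by
    funext i
    exact hc i
  rw [this]
  exact hli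

lemma field_minor {K : Type*} [Field K] {p q r : ℕ} (A : Matrix (Fin p) (Fin q) K)
    (hA : A.rank = r) :
    ∃ (ri : Fin r → Fin p) (ci : Fin r → Fin q), (A.submatrix ri ci).det ≠ 0 := by
  obtain ⟨ci, hci⟩ := field_cols A hA
  have hr : (A.submatrix id ci)ᵀ.rank = r := by
    have := LinearIndependent.rank_matrix (M := (A.submatrix id ci)ᵀ) hci
    simpa using this
  obtain ⟨ri, hri⟩ := field_cols (A.submatrix id ci)ᵀ hr
  refine ⟨ri, ci, ?_⟩
  have h2 : LinearIndependent K (A.submatrix ri ci).row := hri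
  rw [Matrix.linearIndependent_rows_iff_isUnit, Matrix.isUnit_iff_isUnit_det] at h2
  exact h2.ne_zero

/-- The rank of a matrix at a prime. -/
noncomputable def rkAt {p q : ℕ} (P : Ideal R) [P.IsPrime] (A : Matrix (Fin p) (Fin q) R) : ℕ :=
  (A.map (algebraMap R (FractionRing (R ⧸ P)))).rank

lemma alg_eq_zero (P : Ideal R) [P.IsPrime] (x : R) :
    algebraMap R (FractionRing (R ⧸ P)) x = 0 ↔ x ∈ P := by
  rw [IsScalarTower.algebraMap_apply R (R ⧸ P), Ideal.Quotient.algebraMap_eq,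
    FaithfulSMul.algebraMap_eq_zero_iff, Ideal.Quotient.eq_zero_iff_mem]

lemma rkAt_minor {p q : ℕ} (P : Ideal R) [P.IsPrime] (A : Matrix (Fin p) (Fin q) R) :
    ¬ minorsIdeal (rkAt P A) A ≤ P := by
  intro h
  obtain ⟨ri, ci, hd⟩ := field_minor (A.map (algebraMap R (FractionRing (R ⧸ P)))) rfl
  apply hd
  have := h (minor_mem A ri ci)
  rw [← alg_eq_zero P, RingHom.map_det] at this
  exact this

lemma clear_denom (P : Ideal R) [P.IsPrime] {q : ℕ} (v : Fin q → FractionRing (R ⧸ P)) :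
    ∃ c : R, c ∉ P ∧ ∃ w : Fin q → R, ∀ i,
      algebraMap R (FractionRing (R ⧸ P)) c * v i = algebraMap R (FractionRing (R ⧸ P)) (w i) := by
  obtain ⟨⟨c, hc⟩, hw⟩ := IsLocalization.exist_integer_multiples_of_finite
    (nonZeroDivisors (R ⧸ P)) v
  choose w hw using hw
  obtain ⟨c, rfl⟩ := Ideal.Quotient.mk_surjective c
  choose w' hw' using fun i => Ideal.Quotient.mk_surjective (w i)
  refine ⟨c, fun h => nonZeroDivisors.ne_zero hc (Ideal.Quotient.eq_zero_iff_mem.2 h), w',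
    fun i => ?_⟩
  have := hw i
  rw [← hw' i] at this
  rw [IsScalarTower.algebraMap_apply R (R ⧸ P), IsScalarTower.algebraMap_apply R (R ⧸ P) _ (w' i),
    Ideal.Quotient.algebraMap_eq, this, Algebra.smul_def]

lemma rkAt_add {p q l : ℕ} (P : Ideal R) [P.IsPrime]
    (A : Matrix (Fin p) (Fin q) R) (B : Matrix (Fin q) (Fin l) R) (hAB : A * B = 0)
    (h : ∀ v : Fin q → R, (∀ i, (A *ᵥ v) i ∈ P) → ∃ D, D ∉ P ∧ ∃ u, ∀ i,
      (D • v - B *ᵥ u) i ∈ P) : rkAt P A + rkAt P B = q := by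
  set f := algebraMap R (FractionRing (R ⧸ P)) with hf
  have hle : rkAt P A + rkAt P B ≤ q := by
    have : A.map f * B.map f = 0 := by
      rw [← Matrix.map_mul, hAB]; simp
    have h2 := Matrix.rank_add_rank_le_card_of_mul_eq_zero this
    rw [Fintype.card_fin] at h2
    exact h2
  refine le_antisymm hle ?_
  have hker : LinearMap.ker (A.map f).mulVecLin ≤ LinearMap.range (B.map f).mulVecLin := by
    intro v hv
    rw [LinearMap.mem_ker, Matrix.mulVecLin_apply] at hv
    obtain ⟨c, hc, w, hw⟩ := clear_denom P v
    have hw' : f ∘ w = f c • v := by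
      funext i
      exact (hw i).symm
    obtain ⟨D, hD, u, hu⟩ := h w (fun i => by
      rw [← alg_eq_zero P, ← hf, RingHom.map_mulVec, hw', Matrix.mulVec_smul, hv]
      simp)
    have hu' : f D • (f ∘ w) = (B.map f) *ᵥ (f ∘ u) := by
      funext i
      have := hu i
      rw [← alg_eq_zero P, ← hf, Pi.sub_apply, map_sub, RingHom.map_mulVec, sub_eq_zero] at this
      rw [← this]
      simp
    have hfD : f D ≠ 0 := fun h => hD ((alg_eq_zero P _).1 h)
    have hfc : f c ≠ 0 := fun h => hc ((alg_eq_zero P _).1 h)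
    refine ⟨(f D * f c)⁻¹ • (f ∘ u), ?_⟩
    rw [Matrix.mulVecLin_apply, Matrix.mulVec_smul, ← hu', hw', smul_smul (f D), smul_smul,
      inv_mul_cancel₀ (mul_ne_zero hfD hfc), one_smul]
  have h1 := LinearMap.finrank_range_add_finrank_ker (A.map f).mulVecLin
  have h2 := Submodule.finrank_mono hker
  rw [Module.finrank_fin_fun] at h1
  rw [rkAt, rkAt, Matrix.rank, Matrix.rank, ← hf]
  omega

end BE
namespace BE

/-- Vectors with all coordinates in `J`. -/
def VJ (J : Ideal R) (q : ℕ) : Submodule R (Fin q → R) := Submodule.pi Set.univ fun _ => J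

lemma mem_VJ {J : Ideal R} {q : ℕ} {v : Fin q → R} : v ∈ VJ J q ↔ ∀ i, v i ∈ J := by
  simp [VJ, Submodule.mem_pi]

lemma VJ_bot {q : ℕ} {v : Fin q → R} : v ∈ VJ (⊥ : Ideal R) q ↔ v = 0 := by
  rw [mem_VJ, funext_iff]; simp

lemma VJ_mono {J J' : Ideal R} (h : J ≤ J') {q : ℕ} {v : Fin q → R} (hv : v ∈ VJ J q) :
    v ∈ VJ J' q := mem_VJ.2 fun i => h (mem_VJ.1 hv i)

lemma VJ_mulVec {J : Ideal R} {p q : ℕ} (A : Matrix (Fin p) (Fin q) R) {v : Fin q → R}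
    (hv : v ∈ VJ J q) : A *ᵥ v ∈ VJ J p := by
  rw [mem_VJ] at *
  intro i
  simp only [Matrix.mulVec, dotProduct]
  exact Ideal.sum_mem _ fun k _ => J.mul_mem_left _ (hv k)

lemma VJ_reg {J : Ideal R} {x : R} (hx : ∀ a, x * a ∈ J → a ∈ J) {q : ℕ} {v : Fin q → R}
    (hv : x • v ∈ VJ J q) : v ∈ VJ J q :=
  mem_VJ.2 fun i => hx _ (mem_VJ.1 hv i)

lemma VJ_sup {J : Ideal R} {x : R} {q : ℕ} {v : Fin q → R} :
    v ∈ VJ (J ⊔ Ideal.span {x}) q ↔ ∃ w, v - x • w ∈ VJ J q := by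
  constructor
  · intro h
    have : ∀ i, ∃ c, v i - x * c ∈ J := by
      intro i
      obtain ⟨y, hy, z, hz, hyz⟩ := Submodule.mem_sup.1 (mem_VJ.1 h i)
      obtain ⟨c, rfl⟩ := Ideal.mem_span_singleton'.1 hz
      refine ⟨c, ?_⟩
      rw [← hyz, mul_comm]
      simpa using hy
    choose w hw using this
    exact ⟨w, mem_VJ.2 hw⟩
  · rintro ⟨w, hw⟩
    have h1 : x • w ∈ VJ (J ⊔ Ideal.span {x}) q := by
      refine mem_VJ.2 fun i => ?_
      refine Ideal.mem_sup_right ?_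
      exact Ideal.mul_mem_right _ _ (Ideal.mem_span_singleton_self x)
    have h2 : v - x • w ∈ VJ (J ⊔ Ideal.span {x}) q := VJ_mono le_sup_left hw
    simpa using add_mem h2 h1

/-- Weak regularity of a list modulo an ideal. -/
def WR : Ideal R → List R → Prop
  | _, [] => True
  | J, x :: xs => (∀ a, x * a ∈ J → a ∈ J) ∧ WR (J ⊔ Ideal.span {x}) xs

/-- Exactness modulo an ideal. -/
def Ex (J : Ideal R) {p q l : ℕ} (A : Matrix (Fin p) (Fin q) R) (B : Matrix (Fin q) (Fin l) R) :
    Prop := ∀ v, A *ᵥ v ∈ VJ J p → ∃ u, v - B *ᵥ u ∈ VJ J q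

lemma sup_cons (J : Ideal R) (x : R) (xs : List R) :
    J ⊔ Ideal.ofList (x :: xs) = (J ⊔ Ideal.span {x}) ⊔ Ideal.ofList xs := by
  rw [Ideal.ofList_cons, sup_assoc]

lemma wr_append (xs : List R) (x : R) : ∀ J : Ideal R, WR J (xs ++ [x]) ↔
    WR J xs ∧ ∀ a, x * a ∈ J ⊔ Ideal.ofList xs → a ∈ J ⊔ Ideal.ofList xs := by
  induction xs with
  | nil => intro J; simp [WR]
  | cons y ys ih =>
    intro J
    rw [List.cons_append, WR, WR, ih, sup_cons, and_assoc]

lemma wr_iff (xs : List R) : RingTheory.Sequence.IsWeaklyRegular R xs ↔ WR ⊥ xs := by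
  induction xs using List.reverseRecOn with
  | nil => simp [WR]
  | append_singleton xs x ih =>
    rw [wr_append, ← ih, RingTheory.Sequence.isWeaklyRegular_append_iff,
      RingTheory.Sequence.isWeaklyRegular_singleton_iff,
      isSMulRegular_quotient_iff_mem_of_smul_mem]
    simp

lemma ex_step {J : Ideal R} {x : R} (hx : ∀ a, x * a ∈ J → a ∈ J) {p q l m : ℕ}
    {A : Matrix (Fin p) (Fin q) R} {B : Matrix (Fin q) (Fin l) R} {C : Matrix (Fin l) (Fin m) R}
    (hAB : A * B = 0) (h1 : Ex J A B) (h2 : Ex J B C) :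
    Ex (J ⊔ Ideal.span {x}) B C := by
  intro v hv
  obtain ⟨w, hw⟩ := VJ_sup.1 hv
  have hAw : A *ᵥ w ∈ VJ J p := by
    apply VJ_reg hx
    have := VJ_mulVec A hw
    rw [Matrix.mulVec_sub, Matrix.mulVec_mulVec, hAB, Matrix.zero_mulVec, zero_sub,
      neg_mem_iff, Matrix.mulVec_smul] at this
    exact this
  obtain ⟨u, hu⟩ := h1 w hAw
  have hB : B *ᵥ (v - x • u) ∈ VJ J q := by
    have h3 := add_mem hw (Submodule.smul_mem _ x hu)
    have h4 : B *ᵥ (v - x • u) = (B *ᵥ v - x • w) + x • (w - B *ᵥ u) := by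
      rw [Matrix.mulVec_sub, Matrix.mulVec_smul, smul_sub]; abel
    rw [h4]; exact h3
  obtain ⟨y, hy⟩ := h2 _ hB
  refine ⟨y, VJ_sup.2 ⟨u, ?_⟩⟩
  rwa [sub_right_comm]

lemma ex_list {b : ℕ → ℕ} (M : ∀ i, Matrix (Fin (b i)) (Fin (b (i + 1))) R)
    (hM : ∀ i, M i * M (i + 1) = 0) (xs : List R) : ∀ (J : Ideal R) (k : ℕ), WR J xs →
    (∀ j, k ≤ j → Ex J (M j) (M (j + 1))) →
    ∀ j, k + xs.length ≤ j → Ex (J ⊔ Ideal.ofList xs) (M j) (M (j + 1)) := by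
  induction xs with
  | nil => intro J k _ h j hj; simpa using h j hj
  | cons x xs ih =>
    intro J k hw h j hj
    rw [sup_cons]
    rw [List.length_cons] at hj
    refine ih _ (k + 1) hw.2 ?_ j (by omega)
    intro i hi
    obtain ⟨i, rfl⟩ : ∃ i', i = i' + 1 := ⟨i - 1, by omega⟩
    exact ex_step hw.1 (hM i) (h i (by omega)) (h (i + 1) (by omega))

lemma depth_lemma {b : ℕ → ℕ} (M : ∀ i, Matrix (Fin (b i)) (Fin (b (i + 1))) R)
    (hM : ∀ i, M i * M (i + 1) = 0) (D : R) (ℓ : ℕ) : ∀ (k : ℕ) (J : Ideal R) (xs : List R) (j' : ℕ),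
    WR J xs → ℓ + 1 ≤ xs.length → (∀ j, k + 1 ≤ j → Ex J (M j) (M (j + 1))) →
    j' = k + 1 + ℓ → (∃ t : Matrix (Fin (b (j' + 1))) (Fin (b j')) R, M j' * t * M j' = D • M j') →
    ∀ z, (∀ x ∈ xs, ∃ u, x • z - M (k + 1) *ᵥ u ∈ VJ J _) →
      ∃ u, D • z - M (k + 1) *ᵥ u ∈ VJ J _ := by
  induction ℓ with
  | zero =>
    intro k J xs j' hw hl hE hj' ht z hz
    subst hj'
    obtain ⟨t, ht⟩ := ht
    change M (k + 1) * t * M (k + 1) = D • M (k + 1) at ht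
    match xs, hl, hw with
    | x :: xs, _, hw =>
      obtain ⟨w, hw'⟩ := hz x (by simp)
      refine ⟨t *ᵥ z, VJ_reg hw.1 ?_⟩
      have h1 : x • (D • z - M (k + 1) *ᵥ (t *ᵥ z)) =
          D • (x • z - M (k + 1) *ᵥ w) - (M (k + 1) * t) *ᵥ (x • z - M (k + 1) *ᵥ w) := by
        simp only [smul_sub, Matrix.mulVec_sub, Matrix.mulVec_smul, Matrix.mulVec_mulVec, ht,
          Matrix.smul_mulVec]
        rw [smul_comm x D]
        abel
      rw [h1]
      exact sub_mem (Submodule.smul_mem _ _ hw') (VJ_mulVec _ hw')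
  | succ ℓ ih =>
    intro k J xs j' hw hl hE hj' ht z hz
    match xs, hl, hw, hz with
    | x :: xs, hl, hw, hz =>
      obtain ⟨u, hu⟩ := hz x (by simp)
      have key : ∃ w, D • u - M (k + 1 + 1) *ᵥ w ∈ VJ (J ⊔ Ideal.span {x}) _ := by
        refine ih (k + 1) (J ⊔ Ideal.span {x}) xs j' hw.2 (by simpa using hl) ?_ (by omega) ht u ?_
        · intro i hi
          obtain ⟨i, rfl⟩ : ∃ i', i = i' + 1 := ⟨i - 1, by omega⟩
          exact ex_step hw.1 (hM i) (hE i (by omega)) (hE (i + 1) (by omega))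
        · intro y hy
          obtain ⟨u', hu'⟩ := hz y (by simp [hy])
          have h1 : M (k + 1) *ᵥ (y • u - x • u') ∈ VJ J _ := by
            have h2 : M (k + 1) *ᵥ (y • u - x • u') =
              x • (y • z - M (k + 1) *ᵥ u') - y • (x • z - M (k + 1) *ᵥ u) := by
              simp only [smul_sub, Matrix.mulVec_sub, Matrix.mulVec_smul]
              rw [smul_comm x y]
              abel
            rw [h2]
            exact sub_mem (Submodule.smul_mem _ _ hu') (Submodule.smul_mem _ _ hu)
          obtain ⟨w, hw'⟩ := hE (k + 1) le_rfl _ h1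
          refine ⟨w, VJ_sup.2 ⟨u', ?_⟩⟩
          rwa [sub_right_comm]
      obtain ⟨w, hw'⟩ := key
      obtain ⟨u', hu'⟩ := VJ_sup.1 hw'
      refine ⟨u', VJ_reg hw.1 ?_⟩
      have h1 : x • (D • z - M (k + 1) *ᵥ u') = D • (x • z - M (k + 1) *ᵥ u) +
          M (k + 1) *ᵥ (D • u - M (k + 1 + 1) *ᵥ w - x • u') := by
        simp only [smul_sub, Matrix.mulVec_sub, Matrix.mulVec_smul, Matrix.mulVec_mulVec, hM,
          Matrix.zero_mulVec]
        rw [smul_comm x D]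
        abel
      rw [h1]
      exact add_mem (Submodule.smul_mem _ _ hu) (VJ_mulVec _ hu')

lemma exists_prime [IsNoetherianRing R] {V : Type*} [AddCommGroup V] [Module R V]
    (K N : Submodule R V) (z : V) (hz : z ∈ K) (hzN : z ∉ N) :
    ∃ y ∈ K, ∃ P : Ideal R, P.IsPrime ∧ (∀ c, c ∈ P ↔ c • y ∈ N) ∧ ∀ c, c • z ∈ N → c ∈ P := by
  let a : V → Ideal R := fun y => N.comap (LinearMap.toSpanSingleton R V y)
  have ha : ∀ y c, c ∈ a y ↔ c • y ∈ N := fun y c => by simp [a]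
  let S : Set (Ideal R) := {I | ∃ y ∈ K, y ∉ N ∧ I = a y ∧ a z ≤ I}
  obtain ⟨P, ⟨y, hy, hyN, rfl, hle⟩, hmax⟩ :=
    (inferInstance : WellFoundedGT (Ideal R)).wf.has_min S ⟨a z, z, hz, hzN, rfl, le_rfl⟩
  refine ⟨y, hy, a y, ?_, ha y, fun c hc => hle ((ha z c).2 hc)⟩
  refine ⟨?_, ?_⟩
  · intro h
    apply hyN
    have : (1 : R) ∈ a y := by rw [h]; trivial
    simpa using (ha y 1).1 this
  · intro c d hcd
    by_contra! hc
    have hcy : c • y ∉ N := fun h => hc.1 ((ha y c).2 h)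
    have hle2 : a y ≤ a (c • y) := by
      intro e he
      rw [ha] at *
      rw [smul_comm]
      exact N.smul_mem _ he
    have := hmax (a (c • y)) ⟨c • y, K.smul_mem _ hy, hcy, rfl, hle.trans hle2⟩
    have heq : a y = a (c • y) := by
      by_contra hne
      exact this (lt_of_le_of_ne hle2 hne)
    apply hc.2
    rw [heq, ha, smul_smul, mul_comm]
    exact (ha y _).1 hcd

end BE
namespace BE

lemma minorsIdeal_zero {p q : ℕ} (A : Matrix (Fin p) (Fin q) R) : minorsIdeal 0 A = ⊤ := by
  rw [Ideal.eq_top_iff_one]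
  have := minor_mem A (Fin.elim0 : Fin 0 → Fin p) (Fin.elim0 : Fin 0 → Fin q)
  simpa using this

theorem backward [IsNoetherianRing R] {b : ℕ → ℕ}
    (M : ∀ i, Matrix (Fin (b i)) (Fin (b (i + 1))) R)
    (hM : ∀ i, M i * M (i + 1) = 0) (n : ℕ) (hb : ∀ j, n < j → b j = 0)
    (r : ℕ → ℕ) (hr : ∀ j, r j + r (j + 1) = b (j + 1))
    (hg : ∀ j, GradeGE (minorsIdeal (r j) (M j)) (j + 1)) :
    ∀ j, Ex ⊥ (M j) (M (j + 1)) := by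
  have main : ∀ d k, n ≤ k + d → Ex ⊥ (M k) (M (k + 1)) := by
    intro d
    induction d with
    | zero =>
      intro k hk v _
      refine ⟨0, mem_VJ.2 fun i => ?_⟩
      have := hb (k + 1) (by omega)
      have := i.2
      omega
    | succ d ih =>
      intro k hk z hz
      rw [VJ_bot] at hz
      have hE : ∀ j, k + 1 ≤ j → Ex ⊥ (M j) (M (j + 1)) := fun j hj => ih j (by omega)
      by_contra hcon
      have hzN : z ∉ LinearMap.range (M (k + 1)).mulVecLin := by
        rintro ⟨u, hu⟩
        exact hcon ⟨u, by rw [VJ_bot, ← hu, Matrix.mulVecLin_apply, sub_self]⟩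
      obtain ⟨y, hy, P, hP, hPy, -⟩ := exists_prime (LinearMap.ker (M k).mulVecLin) _ z
        (by simpa using hz) hzN
      rw [LinearMap.mem_ker, Matrix.mulVecLin_apply] at hy
      have hbig : ∀ j, n ≤ j → ¬ minorsIdeal (r j) (M j) ≤ P := by
        intro j hj h
        have h1 := hr j
        have h2 := hb (j + 1) (by omega)
        have h3 : r j = 0 := by omega
        rw [h3, minorsIdeal_zero] at h
        exact hP.ne_top (top_le_iff.1 h)
      by_cases hex : ∃ j, k ≤ j ∧ minorsIdeal (r j) (M j) ≤ P
      · obtain ⟨j0, hj0⟩ := hex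
        classical
        have hj0n : j0 ≤ n := by
          by_contra h
          exact hbig j0 (by omega) hj0.2
        let j := Nat.findGreatest (fun j => k ≤ j ∧ minorsIdeal (r j) (M j) ≤ P) n
        obtain ⟨hkj, hjP⟩ : k ≤ j ∧ minorsIdeal (r j) (M j) ≤ P :=
          Nat.findGreatest_spec (P := fun j => k ≤ j ∧ minorsIdeal (r j) (M j) ≤ P) hj0n hj0
        have hgt : ∀ i, j < i → ¬ minorsIdeal (r i) (M i) ≤ P := by
          intro i hi h
          rcases le_or_gt i n with hin | hin
          · exact Nat.findGreatest_is_greatest hi hin ⟨by omega, h⟩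
          · exact hbig i hin.le h
        obtain ⟨xs, hlen, hxs, hreg⟩ := hg j
        obtain ⟨D, hD, -, t1, t2, ht⟩ := key (M (j + 1)) (M (j + 1 + 1)) (hM _) (hr (j + 1)) P
          (hgt _ (by omega)) (hgt _ (by omega))
        obtain ⟨u, hu⟩ := depth_lemma M hM D (j - k) k ⊥ xs (j + 1) ((wr_iff xs).1 hreg) (by omega)
          hE (by omega) ⟨_, ht⟩ y (by
            intro x hx
            obtain ⟨u, hu⟩ := (hPy x).1 (hjP (hxs x hx))
            exact ⟨u, by rw [VJ_bot, ← hu, Matrix.mulVecLin_apply, sub_self]⟩)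
        apply hD
        rw [hPy]
        rw [VJ_bot, sub_eq_zero] at hu
        exact ⟨u, hu.symm⟩
      · push Not at hex
        obtain ⟨D, hD, h1, -⟩ := key (M k) (M (k + 1)) (hM _) (hr k) P
          (hex _ le_rfl) (hex _ (by omega))
        obtain ⟨u, hu⟩ := h1 y hy
        apply hD
        rw [hPy]
        exact ⟨u, hu.symm⟩
  intro j
  exact main n j (by omega)

lemma rkAt_le {p q : ℕ} (P : Ideal R) [P.IsPrime] (A : Matrix (Fin p) (Fin q) R) :
    rkAt P A ≤ p ∧ rkAt P A ≤ q :=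
  ⟨Matrix.rank_le_height _, Matrix.rank_le_width _⟩

lemma local_ranks {b : ℕ → ℕ} (M : ∀ i, Matrix (Fin (b i)) (Fin (b (i + 1))) R)
    (hM : ∀ i, M i * M (i + 1) = 0) (n : ℕ) (hb : ∀ j, n < j → b j = 0)
    (P : Ideal R) [P.IsPrime] (J : Ideal R) (s : R) (hP : ∀ c, c ∈ P ↔ c * s ∈ J) (k : ℕ)
    (hE : ∀ j, k ≤ j → Ex J (M j) (M (j + 1))) :
    ∀ j, k ≤ j → rkAt P (M j) + rkAt P (M (j + 1)) = b (j + 1) := by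
  have main : ∀ d j, k ≤ j → n ≤ j + d → rkAt P (M j) + rkAt P (M (j + 1)) = b (j + 1) := by
    intro d
    induction d with
    | zero =>
      intro j hk hj
      have h1 := hb (j + 1) (by omega)
      have h2 := (rkAt_le P (M j)).2
      have h3 := (rkAt_le P (M (j + 1))).1
      omega
    | succ d ih =>
      intro j hk hj
      obtain ⟨D, hD, -, t1, t2, ht⟩ := key (M (j + 1)) (M (j + 1 + 1)) (hM _)
        (ih (j + 1) (by omega) (by omega)) P (rkAt_minor P _) (rkAt_minor P _)
      refine rkAt_add P _ _ (hM j) ?_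
      intro v hv
      refine ⟨D, hD, (t1 * t2) *ᵥ v, ?_⟩
      have h1 : M j *ᵥ (s • v) ∈ VJ J _ := by
        refine mem_VJ.2 fun i => ?_
        rw [Matrix.mulVec_smul, Pi.smul_apply, smul_eq_mul, mul_comm]
        exact (hP _).1 (hv i)
      obtain ⟨w, hw⟩ := hE j hk _ h1
      have h2 : s • (D • v - M (j + 1) *ᵥ ((t1 * t2) *ᵥ v)) =
          D • (s • v - M (j + 1) *ᵥ w) -
            (M (j + 1) * (t1 * t2)) *ᵥ (s • v - M (j + 1) *ᵥ w) := by
        simp only [smul_sub, Matrix.mulVec_sub, Matrix.mulVec_smul]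
        have h5 : (M (j + 1) * (t1 * t2)) *ᵥ (M (j + 1) *ᵥ w) = D • (M (j + 1) *ᵥ w) := by
          rw [Matrix.mulVec_mulVec, ht, Matrix.smul_mulVec]
        rw [h5, smul_comm s D, Matrix.mulVec_mulVec]
        abel
      have h3 : s • (D • v - M (j + 1) *ᵥ ((t1 * t2) *ᵥ v)) ∈ VJ J _ := by
        rw [h2]
        exact sub_mem (Submodule.smul_mem _ _ hw) (VJ_mulVec _ hw)
      intro i
      rw [hP, mul_comm]
      exact mem_VJ.1 h3 i
  intro j hj
  exact main n j hj (by omega)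

lemma unique_ranks (b : ℕ → ℕ) (n : ℕ) (hb : ∀ j, n < j → b j = 0) (f g : ℕ → ℕ) (k : ℕ)
    (hf : ∀ j, k ≤ j → f j + f (j + 1) = b (j + 1))
    (hg : ∀ j, k ≤ j → g j + g (j + 1) = b (j + 1)) : ∀ j, k ≤ j → f j = g j := by
  have main : ∀ d j, k ≤ j → n ≤ j + d → f j = g j := by
    intro d
    induction d with
    | zero =>
      intro j hk hj
      have h1 := hb (j + 1) (by omega)
      have h2 := hf j hk
      have h3 := hg j hk
      omega
    | succ d ih =>
      intro j hk hj
      have h1 := ih (j + 1) (by omega) (by omega)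
      have h2 := hf j hk
      have h3 := hg j hk
      omega
  exact fun j hj => main n j hj (by omega)

/-- Minors of a matrix that factors through a smaller free module vanish. -/
lemma det_factor {c ρ : ℕ} (h : ρ < c) (X : Matrix (Fin c) (Fin ρ) R)
    (Y : Matrix (Fin ρ) (Fin c) R) : (X * Y).det = 0 := by
  let X' : Matrix (Fin c) (Fin c) R := fun i k => if hk : k.1 < ρ then X i ⟨k, hk⟩ else 0
  let Y' : Matrix (Fin c) (Fin c) R := fun k j => if hk : k.1 < ρ then Y ⟨k, hk⟩ j else 0
  have h1 : X * Y = X' * Y' := by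
    ext i j
    rw [Matrix.mul_apply, Matrix.mul_apply]
    obtain ⟨e, rfl⟩ := Nat.exists_eq_add_of_le h.le
    rw [Fin.sum_univ_add]
    simp [X', Y']
  rw [h1, Matrix.det_mul, Matrix.det_eq_zero_of_column_eq_zero (A := X') ⟨ρ, h⟩ (by simp [X']),
    zero_mul]

lemma exists_regular [IsNoetherianRing R] (I J : Ideal R)
    (h : ∀ P : Ideal R, P.IsPrime → ∀ s, (∀ c, c ∈ P ↔ c * s ∈ J) → ¬ I ≤ P) :
    ∃ x ∈ I, ∀ a, x * a ∈ J → a ∈ J := by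
  by_contra! hcon
  have hfin := associatedPrimes.finite R (R ⧸ J)
  have hsub : (I : Set R) ⊆ ⋃ p ∈ (hfin.toFinset : Set (Ideal R)), p := by
    intro x hx
    obtain ⟨a, ha, haJ⟩ := hcon x hx
    have := biUnion_associatedPrimes_eq_zero_divisors R (R ⧸ J)
    have hmem : x ∈ ⋃ p ∈ associatedPrimes R (R ⧸ J), (p : Set R) := by
      rw [this]
      refine ⟨Ideal.Quotient.mk J a, ?_, ?_⟩
      · rwa [Ne, Ideal.Quotient.eq_zero_iff_mem]
      · exact Ideal.Quotient.eq_zero_iff_mem.2 ha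
    simpa using hmem
  rw [Ideal.subset_union_prime (f := fun p : Ideal R => p) ⊥ ⊥
    (fun p hp _ _ => (hfin.mem_toFinset.1 hp).isPrime)] at hsub
  obtain ⟨P, hP, hIP⟩ := hsub
  rw [Set.Finite.mem_toFinset, AssociatedPrimes.mem_iff, isAssociatedPrime_iff] at hP
  obtain ⟨hPp, x, hx⟩ := hP
  obtain ⟨s, rfl⟩ := Ideal.Quotient.mk_surjective x
  refine h P hPp s (fun c => ?_) hIP
  rw [hx, Submodule.mem_colon_singleton, Submodule.mem_bot, ← Ideal.Quotient.eq_zero_iff_mem]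
  rfl

theorem forward [IsNoetherianRing R] [Nontrivial R] {b : ℕ → ℕ}
    (M : ∀ i, Matrix (Fin (b i)) (Fin (b (i + 1))) R)
    (hM : ∀ i, M i * M (i + 1) = 0) (n : ℕ) (hb : ∀ j, n < j → b j = 0)
    (hE : ∀ j, Ex ⊥ (M j) (M (j + 1))) :
    ∃ r : ℕ → ℕ, ∀ j, r j + r (j + 1) = b (j + 1) ∧ matRank (M j) = r j ∧
      GradeGE (minorsIdeal (r j) (M j)) (j + 1) := by
  obtain ⟨y, -, P0, hP0, hPy, -⟩ := exists_prime (⊤ : Ideal R) ⊥ 1 trivial (by simp)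
  let r : ℕ → ℕ := fun j => rkAt P0 (M j)
  have hr : ∀ j, r j + r (j + 1) = b (j + 1) := fun j =>
    local_ranks M hM n hb P0 ⊥ y hPy 0 (fun j _ => hE j) j (Nat.zero_le j)
  -- at every other relevant prime the ranks agree
  have hagree : ∀ (P J : Ideal R) (hP : P.IsPrime) (s : R) (k : ℕ), (∀ c, c ∈ P ↔ c * s ∈ J) →
      (∀ j, k ≤ j → Ex J (M j) (M (j + 1))) → ∀ j, k ≤ j →
      ¬ minorsIdeal (r j) (M j) ≤ P := by
    intro P J hP s k hs hEJ j hj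
    have h1 := unique_ranks b n hb r (fun j => rkAt P (M j)) k (fun j _ => hr j)
      (local_ranks M hM n hb P J s hs k hEJ) j hj
    rw [h1]
    exact rkAt_minor P (M j)
  refine ⟨r, fun j => ⟨hr j, ?_, ?_⟩⟩
  · have hmem : r j ∈ {r | minorsIdeal r (M j) ≠ ⊥} := by
      intro h
      exact rkAt_minor P0 (M j) (by rw [show rkAt P0 (M j) = r j from rfl, h]; exact bot_le)
    have hub : ∀ c ∈ {r | minorsIdeal r (M j) ≠ ⊥}, c ≤ r j := by
      intro c hc
      by_contra! hlt
      apply hc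
      rw [minorsIdeal, Ideal.span_eq_bot]
      rintro d ⟨ri, ci, rfl⟩
      by_contra hd
      obtain ⟨s, -, P, hP, hPs, hPd⟩ := exists_prime (⊤ : Ideal R) ⊥ _ trivial
        (show (((M j).submatrix ri ci).det) ∉ (⊥ : Ideal R) by simpa using hd)
      have hag := hagree P ⊥ hP s 0 hPs (fun j _ => hE j)
      obtain ⟨D, hD, -, t1, t2, ht⟩ := key (M j) (M (j + 1)) (hM j) (hr j) P
        (hag j (Nat.zero_le _)) (hag (j + 1) (Nat.zero_le _))
      have h1 : D ^ c * ((M j).submatrix ri ci).det = 0 := by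
        have h2 : ((M j * t1).submatrix ri id * (t2 * M j).submatrix id ci) =
            D • (M j).submatrix ri ci := by
          have h3 := Matrix.submatrix_mul_equiv (M j * t1) (t2 * M j) ri (Equiv.refl _) ci
          rw [Equiv.coe_refl] at h3
          rw [h3]
          have h4 : M j * t1 * (t2 * M j) = D • M j := by
            rw [← ht]; simp only [Matrix.mul_assoc]
          rw [h4]
          rfl
        have h5 := det_factor hlt ((M j * t1).submatrix ri id) ((t2 * M j).submatrix id ci)
        rw [h2, Matrix.det_smul, Fintype.card_fin] at h5
        exact h5
      exact hD (hP.mem_of_pow_mem c (hPd _ (by simpa using h1)))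
    exact (show IsGreatest {r | minorsIdeal r (M j) ≠ ⊥} (r j) from ⟨hmem, hub⟩).csSup_eq
  · have main : ∀ k, k ≤ j + 1 → GradeGE (minorsIdeal (r j) (M j)) k := by
      intro k
      induction k with
      | zero => exact fun _ => ⟨[], rfl, by simp, by simp⟩
      | succ k ih =>
        intro hk
        obtain ⟨xs, hlen, hxs, hreg⟩ := ih (by omega)
        rw [wr_iff] at hreg
        have hEx := ex_list M hM xs ⊥ 0 hreg (fun j _ => hE j)
        obtain ⟨x, hx, hxr⟩ := exists_regular (minorsIdeal (r j) (M j)) (⊥ ⊔ Ideal.ofList xs)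
          (fun P hP s hs => hagree P _ hP s _ hs hEx j (by omega))
        refine ⟨xs ++ [x], by simp [hlen], ?_, ?_⟩
        · intro y hy
          rcases List.mem_append.1 hy with h | h
          · exact hxs y h
          · rw [List.mem_singleton.1 h]; exact hx
        · rw [wr_iff, wr_append]
          exact ⟨hreg, hxr⟩
    exact main _ le_rfl

end BE
namespace BE

lemma wr_one (k : ℕ) : ∀ J : Ideal R, WR J (List.replicate k 1) := by
  induction k with
  | zero => intro J; trivial
  | succ k ih =>
    intro J
    rw [List.replicate_succ]
    exact ⟨fun a ha => by simpa using ha, ih _⟩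

lemma grade_top (k : ℕ) : GradeGE (⊤ : Ideal R) k :=
  ⟨List.replicate k 1, by simp, fun _ _ => trivial, (wr_iff _).2 (wr_one k _)⟩

lemma minors_castLE {p p' q q' : ℕ} (hp : p' = p) (hq : q' = q) (hp' : p' ≤ p) (hq' : q' ≤ q)
    (A : Matrix (Fin p) (Fin q) R) (r : ℕ) :
    minorsIdeal r (A.submatrix (Fin.castLE hp') (Fin.castLE hq')) = minorsIdeal r A := by
  subst hp hq
  rfl

lemma mul_castLE {p p' q q' l l' : ℕ} (hp : p' = p) (hq : q' = q) (hl : l' = l)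
    (hp' : p' ≤ p) (hq' : q' ≤ q) (hl' : l' ≤ l)
    (A : Matrix (Fin p) (Fin q) R) (B : Matrix (Fin q) (Fin l) R) (hAB : A * B = 0) :
    A.submatrix (Fin.castLE hp') (Fin.castLE hq') * B.submatrix (Fin.castLE hq') (Fin.castLE hl')
      = 0 := by
  subst hp hq hl
  exact hAB

lemma ex_castLE {p p' q q' l l' : ℕ} (hp : p' = p) (hq : q' = q) (hl : l' = l)
    (hp' : p' ≤ p) (hq' : q' ≤ q) (hl' : l' ≤ l)
    (A : Matrix (Fin p) (Fin q) R) (B : Matrix (Fin q) (Fin l) R) (hAB : A * B = 0) :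
    Ex ⊥ (A.submatrix (Fin.castLE hp') (Fin.castLE hq'))
      (B.submatrix (Fin.castLE hq') (Fin.castLE hl')) ↔
    Function.Exact B.mulVecLin A.mulVecLin := by
  subst hp hq hl
  change Ex ⊥ A B ↔ _
  constructor
  · intro h v
    constructor
    · intro hv
      obtain ⟨u, hu⟩ := h v (VJ_bot.2 hv)
      rw [VJ_bot, sub_eq_zero] at hu
      exact ⟨u, hu.symm⟩
    · rintro ⟨u, rfl⟩
      rw [Matrix.mulVecLin_apply, Matrix.mulVecLin_apply, Matrix.mulVec_mulVec, hAB,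
        Matrix.zero_mulVec]
  · intro h v hv
    obtain ⟨u, hu⟩ := (h v).1 (VJ_bot.1 hv)
    exact ⟨u, by rw [VJ_bot, ← hu, Matrix.mulVecLin_apply, sub_self]⟩

lemma ex_inj_castLE {p p' q q' l : ℕ} (hp : p' = p) (hq : q' = q)
    (hp' : p' ≤ p) (hq' : q' ≤ q)
    (A : Matrix (Fin p) (Fin q) R) (hl : l = 0) (B : Matrix (Fin q') (Fin l) R) :
    Ex ⊥ (A.submatrix (Fin.castLE hp') (Fin.castLE hq')) B ↔
    Function.Injective A.mulVecLin := by
  subst hp hq hl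
  change Ex ⊥ A B ↔ _
  rw [injective_iff_map_eq_zero]
  constructor
  · intro h v hv
    obtain ⟨u, hu⟩ := h v (VJ_bot.2 hv)
    have hu0 : u = 0 := Subsingleton.elim _ _
    rw [VJ_bot, hu0, Matrix.mulVec_zero, sub_zero] at hu
    exact hu
  · intro h v hv
    refine ⟨0, ?_⟩
    rw [Matrix.mulVec_zero, sub_zero, VJ_bot]
    exact h v (VJ_bot.1 hv)

end BE

/-- Buchsbaum–Eisenbud acyclicity criterion.  A complex
`0 → F_n → F_{n-1} → ⋯ → F_1 → F_0` of finite free modules over a Noetherian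
commutative ring (with `φ_{i+1} : F_{i+1} → F_i` represented by the matrix
`M i`) is exact iff for each `1 ≤ i ≤ n`,
`rank φ_i + rank φ_{i+1} = rank F_i` (with `φ_{n+1} = 0`) and
`grade I_{rank φ_i}(φ_i) ≥ i`. -/
theorem buchsbaum_eisenbud_acyclicity
    (R : Type*) [CommRing R] [IsNoetherianRing R] [Nontrivial R]
    (n : ℕ) (hn : 1 ≤ n) (b : ℕ → ℕ)
    (M : (i : ℕ) → Matrix (Fin (b i)) (Fin (b (i + 1))) R)
    (hcomplex : ∀ i, i + 2 ≤ n → M i * M (i + 1) = 0) :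
    ((∀ j, j + 2 ≤ n →
        Function.Exact (Matrix.mulVecLin (M (j + 1))) (Matrix.mulVecLin (M j))) ∧
      Function.Injective (Matrix.mulVecLin (M (n - 1)))) ↔
    (∀ j, j + 1 ≤ n →
      matRank (M j) + (if j + 1 = n then 0 else matRank (M (j + 1))) = b (j + 1) ∧
        GradeGE (minorsIdeal (matRank (M j)) (M j)) (j + 1)) := by
  let b' : ℕ → ℕ := fun j => if j ≤ n then b j else 0
  have hle : ∀ j, b' j ≤ b j := fun j => by
    simp only [b']; split_ifs <;> omega
  have hbe : ∀ j, j ≤ n → b' j = b j := fun j hj => if_pos hj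
  have hb0 : ∀ j, n < j → b' j = 0 := fun j hj => if_neg (by omega)
  let M' : ∀ i, Matrix (Fin (b' i)) (Fin (b' (i + 1))) R := fun i =>
    (M i).submatrix (Fin.castLE (hle i)) (Fin.castLE (hle (i + 1)))
  have hM' : ∀ i, M' i * M' (i + 1) = 0 := by
    intro i
    rcases le_or_gt (i + 2) n with hi | hi
    · exact BE.mul_castLE (hbe _ (by omega)) (hbe _ (by omega)) (hbe _ (by omega)) _ _ _ _ _
        (hcomplex i hi)
    · ext x y
      have h1 := hb0 (i + 1 + 1) (by omega)
      have h2 := y.2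
      omega
  have hmin : ∀ j, j + 1 ≤ n → ∀ r, minorsIdeal r (M' j) = minorsIdeal r (M j) := fun j hj r =>
    BE.minors_castLE (hbe _ (by omega)) (hbe _ (by omega)) _ _ _ r
  have hrk : ∀ j, j + 1 ≤ n → matRank (M' j) = matRank (M j) := fun j hj => by
    simp only [matRank, hmin j hj]
  have hEx : (∀ j, BE.Ex ⊥ (M' j) (M' (j + 1))) ↔ ((∀ j, j + 2 ≤ n →
        Function.Exact (Matrix.mulVecLin (M (j + 1))) (Matrix.mulVecLin (M j))) ∧
      Function.Injective (Matrix.mulVecLin (M (n - 1)))) := by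
    have h1 : ∀ j, j + 2 ≤ n → (BE.Ex ⊥ (M' j) (M' (j + 1)) ↔
        Function.Exact (Matrix.mulVecLin (M (j + 1))) (Matrix.mulVecLin (M j))) := fun j hj =>
      BE.ex_castLE (hbe _ (by omega)) (hbe _ (by omega)) (hbe _ (by omega)) _ _ _ _ _
        (hcomplex j hj)
    have h2 : BE.Ex ⊥ (M' (n - 1)) (M' (n - 1 + 1)) ↔
        Function.Injective (Matrix.mulVecLin (M (n - 1))) :=
      BE.ex_inj_castLE (hbe _ (by omega)) (hbe _ (by omega)) _ _ _ (hb0 _ (by omega)) _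
    constructor
    · intro h
      exact ⟨fun j hj => (h1 j hj).1 (h j), h2.1 (h _)⟩
    · rintro ⟨ha, hi⟩ j
      rcases le_or_gt (j + 2) n with hj | hj
      · exact (h1 j hj).2 (ha j hj)
      · rcases Nat.lt_or_ge j n with hjn | hjn
        · obtain rfl : j = n - 1 := by omega
          exact h2.2 hi
        · intro v _
          refine ⟨0, BE.mem_VJ.2 fun i => ?_⟩
          have h3 := hb0 (j + 1) (by omega)
          have h4 := i.2
          omega
  rw [← hEx]
  constructor
  · intro h j hj
    obtain ⟨r, hr⟩ := BE.forward M' hM' n hb0 h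
    obtain ⟨hr1, hr2, hr3⟩ := hr j
    rw [hrk j hj] at hr2
    rw [hmin j hj] at hr3
    rw [hr2]
    refine ⟨?_, hr3⟩
    refine Eq.trans ?_ (hr1.trans (hbe (j + 1) hj))
    congr 1
    split_ifs with hjn
    · have h1 := (hr (j + 1)).1
      have h2 := hb0 (j + 1 + 1) (by omega)
      omega
    · rw [← hrk (j + 1) (by omega)]
      exact (hr (j + 1)).2.1
  · intro h
    refine BE.backward M' hM' n hb0 (fun j => if j + 1 ≤ n then matRank (M j) else 0) ?_ ?_
    · intro j
      rcases le_or_gt (j + 1) n with hj | hj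
      · have h1 := (h j hj).1
        refine Eq.trans ?_ (h1.trans (hbe (j + 1) hj).symm)
        rw [if_pos hj]
        congr 1
        split_ifs <;> first | rfl | omega
      · rw [hb0 (j + 1) hj]
        rw [if_neg (by omega), if_neg (by omega)]
    · intro j
      rcases le_or_gt (j + 1) n with hj | hj
      · simp only [hj, if_true]
        rw [hmin j hj]
        exact (h j hj).2
      · rw [if_neg (by omega), BE.minorsIdeal_zero]
        exact BE.grade_top _
end

section
/- For h ≥ 2, the polynomials w = x_2x_3 − x_1x_4, g_i = x_1^ix_3^{h−i+1} − x_2^{i+1}x_4^{h−i} (0 ≤ i ≤ h−1), g_h = x_2^{h+1} − x_1^hx_3, and q_j = x_1^{j+1}x_2^{h−j} − x_0x_3^jx_4^{h−j} (0 ≤ j ≤ h) form a Gröbner basis of the defining ideal of the projective closure of the Arslan curve C(h(h+1), h(h+1)+1, (h+1)^2, (h+1)^2+1), with respect to the degree reverse lexicographic order on k[x_0,x_1,x_2,x_3,x_4] induced by x_1 > x_2 > x_3 > x_4 > x_0. -/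
open MvPolynomial

/-- The degree reverse lexicographic order on monomials in `m` variables, where
`v` lists the variables from greatest to least. -/
def DegRevLexLT {m : ℕ} (v : Fin m → Fin m) (a b : Fin m →₀ ℕ) : Prop :=
  (a.sum fun _ e => e) < (b.sum fun _ e => e) ∨
    ((a.sum fun _ e => e) = (b.sum fun _ e => e) ∧
      ∃ p : Fin m, b (v p) < a (v p) ∧ ∀ q : Fin m, p < q → a (v q) = b (v q))

/-- `μ` is the leading monomial of `f` with respect to `ord`. -/
def IsLeadMonomial {σ : Type*} {k : Type*} [CommSemiring k]
    (ord : (σ →₀ ℕ) → (σ →₀ ℕ) → Prop) (f : MvPolynomial σ k) (μ : σ →₀ ℕ) : Prop :=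
  μ ∈ f.support ∧ ∀ μ' ∈ f.support, μ' ≠ μ → ord μ' μ

/-- `G` is a Gröbner basis of the ideal `I` with respect to `ord`. -/
def IsGroebnerBasis {σ : Type*} {k : Type*} [CommSemiring k]
    (ord : (σ →₀ ℕ) → (σ →₀ ℕ) → Prop) (I : Ideal (MvPolynomial σ k))
    (G : Set (MvPolynomial σ k)) : Prop :=
  (∀ g ∈ G, g ∈ I) ∧ Ideal.span G = I ∧
    ∀ f ∈ I, f ≠ 0 → ∃ g ∈ G, ∃ μg μf, IsLeadMonomial ord g μg ∧
      IsLeadMonomial ord f μf ∧ ∀ i, μg i ≤ μf i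


namespace Arslan

/-- exponent vectors in five variables -/
noncomputable def vec (a b c d e : ℕ) : Fin 5 →₀ ℕ :=
  Finsupp.equivFunOnFinite.symm ![a, b, c, d, e]

@[simp] lemma vec_0 (a b c d e : ℕ) : vec a b c d e 0 = a := rfl
@[simp] lemma vec_1 (a b c d e : ℕ) : vec a b c d e 1 = b := rfl
@[simp] lemma vec_2 (a b c d e : ℕ) : vec a b c d e 2 = c := rfl
@[simp] lemma vec_3 (a b c d e : ℕ) : vec a b c d e 3 = d := rfl
@[simp] lemma vec_4 (a b c d e : ℕ) : vec a b c d e 4 = e := rfl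

lemma ext5 {a b : Fin 5 →₀ ℕ} (h0 : a 0 = b 0) (h1 : a 1 = b 1) (h2 : a 2 = b 2)
    (h3 : a 3 = b 3) (h4 : a 4 = b 4) : a = b := by
  ext i
  fin_cases i <;> assumption

lemma monomial_five {k : Type*} [CommSemiring k] (a b c d e : ℕ) :
    (monomial (vec a b c d e) (1 : k)) = X 0 ^ a * X 1 ^ b * X 2 ^ c * X 3 ^ d * X 4 ^ e := by
  rw [monomial_eq, Finsupp.prod_fintype _ _ (by simp), Fin.prod_univ_five]
  simp

/-- total degree -/
def deg (a : Fin 5 →₀ ℕ) : ℕ := a 0 + a 1 + a 2 + a 3 + a 4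

lemma sum_eq_deg (a : Fin 5 →₀ ℕ) : (a.sum fun _ e => e) = deg a := by
  rw [Finsupp.sum_fintype _ _ (by simp), Fin.sum_univ_five]
  rfl

/-- linear-order key for degrevlex -/
def key (a : Fin 5 →₀ ℕ) : ℕ ×ₗ ℕ ×ₗ ℕ ×ₗ ℕ ×ₗ ℕ :=
  toLex (deg a, toLex (deg a - a 0, toLex (deg a - a 4, toLex (deg a - a 3, deg a - a 2))))

lemma key_lt (a b : Fin 5 →₀ ℕ) : key a < key b ↔
    deg a < deg b ∨ (deg a = deg b ∧ (b 0 < a 0 ∨ (a 0 = b 0 ∧ (b 4 < a 4 ∨ (a 4 = b 4 ∧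
      (b 3 < a 3 ∨ (a 3 = b 3 ∧ b 2 < a 2))))))) := by
  simp only [key, Prod.Lex.toLex_lt_toLex]
  simp only [deg]
  omega

lemma key_inj {a b : Fin 5 →₀ ℕ} (h : key a = key b) : a = b := by
  simp only [key, EmbeddingLike.apply_eq_iff_eq, Prod.mk.injEq] at h
  simp only [deg] at h
  apply ext5 <;> omega

lemma lt_iff (a b : Fin 5 →₀ ℕ) : DegRevLexLT ![1, 2, 3, 4, 0] a b ↔ key a < key b := by
  rw [key_lt, DegRevLexLT, sum_eq_deg, sum_eq_deg]
  constructor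
  · rintro (h | ⟨h, p, hp, hq⟩)
    · exact Or.inl h
    · have q1 := hq 1
      have q2 := hq 2
      have q3 := hq 3
      have q4 := hq 4
      fin_cases p <;> simp at hp q1 q2 q3 q4 <;> simp only [deg] at * <;> omega
  · rintro (h | ⟨h, h'⟩)
    · exact Or.inl h
    · refine Or.inr ⟨h, ?_⟩
      rcases h' with h' | ⟨h0, h' | ⟨h4, h' | ⟨h3, h'⟩⟩⟩
      · refine ⟨4, h', ?_⟩
        intro q; fin_cases q <;> simp
      · refine ⟨3, h', ?_⟩
        intro q; fin_cases q <;> simp [*]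
      · refine ⟨2, h', ?_⟩
        intro q; fin_cases q <;> simp [*]
      · refine ⟨1, h', ?_⟩
        intro q; fin_cases q <;> simp [*]

/-- weight of a monomial -/
noncomputable def wt (h : ℕ) (a : Fin 5 →₀ ℕ) : Fin 2 →₀ ℕ :=
  Finsupp.single 0 (((h + 1) ^ 2 + 1) * a 0 + (h + 2) * a 1 + (h + 1) * a 2 + a 3) +
  Finsupp.single 1 (h * (h + 1) * a 1 + (h * (h + 1) + 1) * a 2 + (h + 1) ^ 2 * a 3
    + ((h + 1) ^ 2 + 1) * a 4)

lemma wt_eq_iff (h : ℕ) (a b : Fin 5 →₀ ℕ) : wt h a = wt h b ↔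
    ((h + 1) ^ 2 + 1) * a 0 + (h + 2) * a 1 + (h + 1) * a 2 + a 3 =
      ((h + 1) ^ 2 + 1) * b 0 + (h + 2) * b 1 + (h + 1) * b 2 + b 3 ∧
    h * (h + 1) * a 1 + (h * (h + 1) + 1) * a 2 + (h + 1) ^ 2 * a 3 + ((h + 1) ^ 2 + 1) * a 4 =
    h * (h + 1) * b 1 + (h * (h + 1) + 1) * b 2 + (h + 1) ^ 2 * b 3 + ((h + 1) ^ 2 + 1) * b 4 := by
  constructor
  · intro H
    have h0 := DFunLike.congr_fun H 0
    have h1 := DFunLike.congr_fun H 1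
    simp [wt] at h0 h1
    exact ⟨h0, h1⟩
  · rintro ⟨h0, h1⟩
    rw [wt, wt, h0, h1]

lemma wt_add (h : ℕ) (a b : Fin 5 →₀ ℕ) : wt h (a + b) = wt h a + wt h b := by
  ext i
  fin_cases i <;> simp [wt] <;> ring

/-- leading exponent / trailing exponent pairs -/
def Rel (h : ℕ) (a b : Fin 5 →₀ ℕ) : Prop :=
  (a = vec 0 0 1 1 0 ∧ b = vec 0 1 0 0 1) ∨
  (∃ i, i ≤ h - 1 ∧ a = vec 0 i 0 (h - i + 1) 0 ∧ b = vec 0 0 (i + 1) 0 (h - i)) ∨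
  (a = vec 0 0 (h + 1) 0 0 ∧ b = vec 0 h 0 1 0) ∨
  (∃ j, j ≤ h ∧ a = vec 0 (j + 1) (h - j) 0 0 ∧ b = vec 1 0 0 j (h - j))

lemma Rel.key_lt {h : ℕ} (hh : 2 ≤ h) {a b : Fin 5 →₀ ℕ} (H : Rel h a b) : key b < key a := by
  rw [Arslan.key_lt]
  rcases H with ⟨rfl, rfl⟩ | ⟨i, hi, rfl, rfl⟩ | ⟨rfl, rfl⟩ | ⟨i, hi, rfl, rfl⟩ <;>
    simp [deg] <;> omega

lemma Rel.wt_eq {h : ℕ} (hh : 2 ≤ h) {a b : Fin 5 →₀ ℕ} (H : Rel h a b) : wt h a = wt h b := by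
  rw [wt_eq_iff]
  rcases H with ⟨rfl, rfl⟩ | ⟨i, hi, rfl, rfl⟩ | ⟨rfl, rfl⟩ | ⟨i, hi, rfl, rfl⟩
  · simp; ring
  · obtain ⟨m, rfl⟩ : ∃ m, h = i + m := ⟨h - i, by omega⟩
    simp; constructor <;> ring
  · simp; constructor <;> ring
  · obtain ⟨m, rfl⟩ : ∃ m, h = i + m := ⟨h - i, by omega⟩
    simp; constructor <;> ring

/-- standard monomials -/
def Std (h : ℕ) (μ : Fin 5 →₀ ℕ) : Prop := ∀ a b, Rel h a b → ¬ a ≤ μ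

lemma le5 {a b : Fin 5 →₀ ℕ} (h0 : a 0 ≤ b 0) (h1 : a 1 ≤ b 1) (h2 : a 2 ≤ b 2)
    (h3 : a 3 ≤ b 3) (h4 : a 4 ≤ b 4) : a ≤ b := by
  intro i
  fin_cases i <;> assumption

lemma Std.cond {h : ℕ} (hh : 2 ≤ h) {μ : Fin 5 →₀ ℕ} (H : Std h μ) :
    (μ 3 = 0 ∧ μ 1 + μ 2 ≤ h) ∨ (1 ≤ μ 3 ∧ μ 2 = 0 ∧ μ 1 + μ 3 ≤ h) ∨
      (μ 3 = 1 ∧ μ 2 = 0 ∧ μ 1 = h) := by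
  have c1 : ¬ (1 ≤ μ 2 ∧ 1 ≤ μ 3) := fun c =>
    H _ _ (Or.inl ⟨rfl, rfl⟩) (le5 (by simp) (by simp) (by simpa using c.1) (by simpa using c.2)
      (by simp))
  have c2 : ¬ (2 ≤ μ 3 ∧ h + 1 ≤ μ 1 + μ 3) := fun c =>
    H _ _ (Or.inr (Or.inl ⟨min (μ 1) (h - 1), by omega, rfl, rfl⟩))
      (le5 (by simp) (by simp) (by simp) (by simp; omega) (by simp))
  have c3 : ¬ (h + 1 ≤ μ 2) := fun c =>
    H _ _ (Or.inr (Or.inr (Or.inl ⟨rfl, rfl⟩)))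
      (le5 (by simp) (by simp) (by simpa using c) (by simp) (by simp))
  have c4 : ¬ (1 ≤ μ 1 ∧ h + 1 ≤ μ 1 + μ 2) := fun c =>
    H _ _ (Or.inr (Or.inr (Or.inr ⟨min (μ 1 - 1) h, by omega, rfl, rfl⟩)))
      (le5 (by simp) (by simp; omega) (by simp; omega) (by simp) (by simp))
  omega

lemma divmod {n m r m' r' : ℕ} (hr : r < n) (hr' : r' < n) (H : n * m + r = n * m' + r') :
    m = m' ∧ r = r' := by
  have e1 : (n * m + r) / n = m := by
    rw [Nat.mul_add_div (by omega), Nat.div_eq_of_lt hr]; simp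
  have e2 : (n * m' + r') / n = m' := by
    rw [Nat.mul_add_div (by omega), Nat.div_eq_of_lt hr']; simp
  have : m = m' := by rw [← e1, ← e2, H]
  subst this
  exact ⟨rfl, by omega⟩

lemma Std.code {h : ℕ} (hh : 2 ≤ h) {μ : Fin 5 →₀ ℕ} (H : Std h μ) :
    ∃ m r, (h + 2) * μ 1 + (h + 1) * μ 2 + μ 3 = (h + 1) * m + r ∧ r < h + 1 ∧
      ((h + 1) * m + r < (h + 1) ^ 2 + 1) ∧
      ((m ≤ h ∧ r ≤ m ∧ μ 3 = 0 ∧ μ 1 = r ∧ μ 2 + r = m) ∨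
       (m ≤ h ∧ m < r ∧ μ 2 = 0 ∧ μ 1 = m ∧ m + μ 3 = r) ∨
       (m = h + 1 ∧ r = 0 ∧ μ 3 = 1 ∧ μ 2 = 0 ∧ μ 1 = h)) := by
  rcases H.cond hh with c | c | c
  · refine ⟨μ 1 + μ 2, μ 1, ?_, by omega, ?_, by omega⟩
    · rw [c.1]; ring
    · nlinarith
  · refine ⟨μ 1, μ 1 + μ 3, ?_, by omega, ?_, by omega⟩
    · rw [c.2.1]; ring
    · nlinarith
  · refine ⟨h + 1, 0, ?_, by omega, ?_, by omega⟩
    · rw [c.1, c.2.1, c.2.2]; ring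
    · nlinarith

lemma Std.inj {h : ℕ} (hh : 2 ≤ h) {μ ν : Fin 5 →₀ ℕ} (H : Std h μ) (H' : Std h ν)
    (hw : wt h μ = wt h ν) : μ = ν := by
  rw [wt_eq_iff] at hw
  obtain ⟨w0, w1⟩ := hw
  obtain ⟨m, r, e, hr, hlt, hc⟩ := H.code hh
  obtain ⟨m', r', e', hr', hlt', hc'⟩ := H'.code hh
  obtain ⟨a1, a2⟩ := divmod (n := (h + 1) ^ 2 + 1) (m := μ 0) (m' := ν 0) hlt hlt' (by
    rw [← e, ← e']; linarith)
  obtain ⟨rfl, rfl⟩ := divmod hr hr' a2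
  have b1 : μ 1 = ν 1 := by omega
  have b2 : μ 2 = ν 2 := by omega
  have b3 : μ 3 = ν 3 := by omega
  refine ext5 a1 b1 b2 b3 ?_
  rw [b1, b2, b3] at w1
  have := Nat.add_left_cancel w1
  exact Nat.eq_of_mul_eq_mul_left (by positivity) this

section poly
variable {k : Type*} [Field k]

/-- binomial generators -/
def Gens (k : Type*) [Field k] (h : ℕ) : Set (MvPolynomial (Fin 5) k) :=
  {q | ∃ a b, Rel h a b ∧ q = monomial a 1 - monomial b 1}

lemma reduce {h : ℕ} (hh : 2 ≤ h) (μ : Fin 5 →₀ ℕ) : ∃ ν, Std h ν ∧ wt h μ = wt h ν ∧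
    key ν ≤ key μ ∧
    (monomial μ 1 - monomial ν 1 : MvPolynomial (Fin 5) k) ∈ Ideal.span (Gens k h) := by
  induction μ using (InvImage.wf key (wellFounded_lt)).induction with
  | _ μ ih =>
  by_cases hs : Std h μ
  · exact ⟨μ, hs, rfl, le_rfl, by simp⟩
  · simp only [Std, not_forall, not_not] at hs
    obtain ⟨a, b, hab, hle⟩ := hs
    obtain ⟨c, rfl⟩ := exists_add_of_le hle
    have hk : key (b + c) < key (a + c) := by
      have := hab.key_lt hh
      rw [Arslan.key_lt] at this ⊢
      simp only [deg, Finsupp.add_apply] at this ⊢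
      omega
    obtain ⟨ν, h1, h2, h3, h4⟩ := ih (b + c) hk
    refine ⟨ν, h1, ?_, h3.trans hk.le, ?_⟩
    · rw [← h2, wt_add, wt_add, hab.wt_eq hh]
    · have h5 : (monomial (a + c) 1 - monomial (b + c) 1 : MvPolynomial (Fin 5) k) ∈
          Ideal.span (Gens k h) := by
        have : (monomial (a + c) 1 - monomial (b + c) 1 : MvPolynomial (Fin 5) k) =
          monomial c 1 * (monomial a 1 - monomial b 1) := by
          rw [mul_sub, monomial_mul, monomial_mul, add_comm a, add_comm b, one_mul]
        rw [this]
        exact Ideal.mul_mem_left _ _ (Ideal.subset_span ⟨a, b, hab, rfl⟩)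
      have := Ideal.add_mem _ h5 h4
      simpa using this

lemma lead_binom {h : ℕ} (hh : 2 ≤ h) {a b : Fin 5 →₀ ℕ} (H : Rel h a b) :
    IsLeadMonomial (DegRevLexLT ![1, 2, 3, 4, 0])
      (monomial a 1 - monomial b 1 : MvPolynomial (Fin 5) k) a := by
  have hlt := H.key_lt hh
  have hne : b ≠ a := by rintro rfl; exact lt_irrefl _ hlt
  constructor
  · simp [mem_support_iff, coeff_monomial, hne]
  · intro μ hμ hμa
    have : μ = b := by
      by_contra hb
      simp [mem_support_iff, coeff_monomial, Ne.symm hb, Ne.symm hμa] at hμ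
    rw [this, lt_iff]
    exact hlt

lemma exists_lead {f : MvPolynomial (Fin 5) k} (hf : f ≠ 0) :
    ∃ μ, IsLeadMonomial (DegRevLexLT ![1, 2, 3, 4, 0]) f μ := by
  obtain ⟨μ, h1, h2⟩ := f.support.exists_max_image key (by
    rwa [Finset.nonempty_iff_ne_empty, ne_eq, MvPolynomial.support_eq_empty])
  refine ⟨μ, h1, fun ν hν hne => ?_⟩
  rw [lt_iff]
  exact lt_of_le_of_ne (h2 ν hν) (fun e => hne (key_inj e))

/-- main abstract argument -/
lemma main {h : ℕ} (hh : 2 ≤ h) (φ : MvPolynomial (Fin 5) k →+* MvPolynomial (Fin 2) k)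
    (hφ : ∀ μ c, φ (monomial μ c) = monomial (wt h μ) c) :
    IsGroebnerBasis (DegRevLexLT ![1, 2, 3, 4, 0]) (RingHom.ker φ) (Gens k h) := by
  have hG : ∀ g ∈ Gens k h, g ∈ RingHom.ker φ := by
    rintro _ ⟨a, b, hab, rfl⟩
    rw [RingHom.mem_ker, map_sub, hφ, hφ, hab.wt_eq hh, sub_self]
  have hle : Ideal.span (Gens k h) ≤ RingHom.ker φ := Ideal.span_le.2 hG
  have pair : ∀ f ∈ RingHom.ker φ, ∀ μ ∈ f.support, ∃ ν ∈ f.support, ν ≠ μ ∧ wt h ν = wt h μ := by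
    intro f hf μ hμ
    by_contra! hcon
    have h1 : coeff (wt h μ) (φ f) = coeff μ f := by
      conv_lhs => rw [f.as_sum, map_sum, coeff_sum]
      rw [Finset.sum_eq_single μ]
      · rw [hφ, coeff_monomial, if_pos rfl]
      · intro ν hν hne
        rw [hφ, coeff_monomial, if_neg (hcon ν hν hne)]
      · intro hn; exact absurd hμ hn
    rw [RingHom.mem_ker.1 hf, coeff_zero] at h1
    exact (mem_support_iff.1 hμ) h1.symm
  choose N hN1 hN2 hN3 hN4 using fun μ => reduce (k := k) hh μ
  refine ⟨hG, le_antisymm hle ?_, ?_⟩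
  · intro f hf
    set f' : MvPolynomial (Fin 5) k := ∑ μ ∈ f.support, monomial (N μ) (coeff μ f) with hf'
    have hd : f - f' ∈ Ideal.span (Gens k h) := by
      have : f - f' = ∑ μ ∈ f.support, C (coeff μ f) * (monomial μ 1 - monomial (N μ) 1) := by
        conv_lhs => rw [f.as_sum]
        rw [hf', ← Finset.sum_sub_distrib]
        refine Finset.sum_congr rfl fun μ _ => ?_
        rw [mul_sub, C_mul_monomial, C_mul_monomial, mul_one]
      rw [this]
      exact Ideal.sum_mem _ fun μ _ => Ideal.mul_mem_left _ _ (hN4 μ)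
    have hker : f' ∈ RingHom.ker φ := by
      have := Ideal.sub_mem _ hf (hle hd)
      simpa using this
    have hstd : ∀ ν ∈ f'.support, Std h ν := by
      intro ν hν
      have := MvPolynomial.support_sum hν
      simp only [Finset.mem_biUnion] at this
      obtain ⟨μ, _, h2⟩ := this
      have := MvPolynomial.support_monomial_subset h2
      rw [Finset.mem_singleton] at this
      rw [this]; exact hN1 μ
    have h0 : f' = 0 := by
      rw [← MvPolynomial.support_eq_empty, Finset.eq_empty_iff_forall_notMem]
      intro μ hμ
      obtain ⟨ν, h1, h2, h3⟩ := pair f' hker μ hμ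
      exact h2 ((hstd ν h1).inj hh (hstd μ hμ) h3)
    rw [h0, sub_zero] at hd
    exact hd
  · intro f hf hne
    obtain ⟨μ, hμ⟩ := exists_lead hne
    have hns : ¬ Std h μ := by
      intro hs
      obtain ⟨ν, h1, h2, h3⟩ := pair f hf μ hμ.1
      have h4 := (lt_iff _ _).1 (hμ.2 ν h1 h2)
      have h5 : N ν = μ := (hN1 ν).inj hh hs ((hN2 ν).symm.trans h3)
      have h6 := hN3 ν
      rw [h5] at h6
      exact absurd h4 (not_lt.2 h6)
    simp only [Std, not_forall, not_not] at hns
    obtain ⟨a, b, hab, hl⟩ := hns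
    exact ⟨_, ⟨a, b, hab, rfl⟩, a, μ, lead_binom hh hab, hμ, hl⟩

end poly
end Arslan

/-- For `h ≥ 2`, the polynomials `w`, `g_i` (`0 ≤ i ≤ h`) and `q_j`
(`0 ≤ j ≤ h`) form a Gröbner basis of the defining ideal of the projective
closure of the Arslan curve `C(h(h+1), h(h+1)+1, (h+1)², (h+1)²+1)` with
respect to degrevlex with `x₁ > x₂ > x₃ > x₄ > x₀`.  Here the variable with
index `0` is `x₀` and the defining ideal of the projective closure is the
kernel of `x₀ ↦ s^{n₄}`, `x_i ↦ s^{n₄-n_i} t^{n_i}`. -/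
theorem arslan_projective_closure_groebner_basis
    (k : Type*) [Field k] (h : ℕ) (hh : 2 ≤ h) :
    letI n₁ : ℕ := h * (h + 1)
    letI n₂ : ℕ := h * (h + 1) + 1
    letI n₃ : ℕ := (h + 1) ^ 2
    letI n₄ : ℕ := (h + 1) ^ 2 + 1
    letI s : MvPolynomial (Fin 2) k := X 0
    letI t : MvPolynomial (Fin 2) k := X 1
    letI I : Ideal (MvPolynomial (Fin 5) k) :=
      RingHom.ker (aeval (R := k)
        ![s ^ n₄, s ^ (n₄ - n₁) * t ^ n₁, s ^ (n₄ - n₂) * t ^ n₂,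
          s ^ (n₄ - n₃) * t ^ n₃, t ^ n₄]).toRingHom
    letI x₀ : MvPolynomial (Fin 5) k := X 0
    letI x₁ : MvPolynomial (Fin 5) k := X 1
    letI x₂ : MvPolynomial (Fin 5) k := X 2
    letI x₃ : MvPolynomial (Fin 5) k := X 3
    letI x₄ : MvPolynomial (Fin 5) k := X 4
    letI G : Set (MvPolynomial (Fin 5) k) :=
      {q | q = x₂ * x₃ - x₁ * x₄ ∨
        (∃ i, i ≤ h - 1 ∧
          q = x₁ ^ i * x₃ ^ (h - i + 1) - x₂ ^ (i + 1) * x₄ ^ (h - i)) ∨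
        q = x₂ ^ (h + 1) - x₁ ^ h * x₃ ∨
        (∃ j, j ≤ h ∧
          q = x₁ ^ (j + 1) * x₂ ^ (h - j) - x₀ * x₃ ^ j * x₄ ^ (h - j))}
    IsGroebnerBasis (DegRevLexLT ![1, 2, 3, 4, 0]) I G := by
  have hG : ∀ G' : Set (MvPolynomial (Fin 5) k), Arslan.Gens k h = G' →
      ∀ φ : MvPolynomial (Fin 5) k →+* MvPolynomial (Fin 2) k,
      (∀ μ c, φ (monomial μ c) = monomial (Arslan.wt h μ) c) →
      IsGroebnerBasis (DegRevLexLT ![1, 2, 3, 4, 0]) (RingHom.ker φ) G' := by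
    rintro _ rfl φ hφ
    exact Arslan.main hh φ hφ
  refine hG _ ?_ _ ?_
  · ext q
    simp only [Arslan.Gens, Arslan.Rel, Set.mem_ofPred_eq]
    constructor
    · rintro ⟨a, b, ⟨rfl, rfl⟩ | ⟨i, hi, rfl, rfl⟩ | ⟨rfl, rfl⟩ | ⟨i, hi, rfl, rfl⟩, rfl⟩
      · left; simp [Arslan.monomial_five]
      · right; left; exact ⟨i, hi, by simp [Arslan.monomial_five]⟩
      · right; right; left; simp [Arslan.monomial_five]
      · right; right; right; exact ⟨i, hi, by simp [Arslan.monomial_five]⟩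
    · rintro (rfl | ⟨i, hi, rfl⟩ | rfl | ⟨i, hi, rfl⟩)
      · exact ⟨_, _, Or.inl ⟨rfl, rfl⟩, by simp [Arslan.monomial_five]⟩
      · exact ⟨_, _, Or.inr (Or.inl ⟨i, hi, rfl, rfl⟩), by simp [Arslan.monomial_five]⟩
      · exact ⟨_, _, Or.inr (Or.inr (Or.inl ⟨rfl, rfl⟩)), by simp [Arslan.monomial_five]⟩
      · exact ⟨_, _, Or.inr (Or.inr (Or.inr ⟨i, hi, rfl, rfl⟩)), by simp [Arslan.monomial_five]⟩
  · intro μ c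
    have e1 : (h + 1) ^ 2 + 1 - h * (h + 1) = h + 2 := by
      rw [show (h + 1) ^ 2 + 1 = h + 2 + h * (h + 1) by ring, Nat.add_sub_cancel]
    have e2 : (h + 1) ^ 2 + 1 - (h * (h + 1) + 1) = h + 1 := by
      rw [show (h + 1) ^ 2 + 1 = h + 1 + (h * (h + 1) + 1) by ring, Nat.add_sub_cancel]
    have e3 : (h + 1) ^ 2 + 1 - (h + 1) ^ 2 = 1 := by omega
    rw [e1, e2, e3]
    have e4 : (monomial (Arslan.wt h μ) c : MvPolynomial (Fin 2) k) =
        C c * (X 0 ^ (Arslan.wt h μ 0) * X 1 ^ (Arslan.wt h μ 1)) := by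
      rw [monomial_eq, Finsupp.prod_fintype _ _ (by simp), Fin.prod_univ_two]
    rw [e4]
    change aeval _ (monomial μ c) = _
    rw [aeval_monomial, Finsupp.prod_fintype _ _ (by simp), Fin.prod_univ_five,
      MvPolynomial.algebraMap_eq]
    congr 1
    simp [Arslan.wt]
    ring
end
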